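/- arXiv:1612.00073 — 7 statements merged into one kernel-verified Lean document; each statement's English description precedes it below -/
import Mathlib

section
/- Let E = { n ∈ ℕ : ‖n√2‖ < 1/√n }. Then E is a generalised polynomial set of natural density 0, and for every r ∈ ℕ there exists m ∈ ℕ such that km ∈ E for all 1 ≤ k ≤ r; in particular, E contains an IP_r set for every r. -/
/-!
Write `d n` for the signed distance from `n√2` to its nearest integer, and let `E` be the set of
`n > 0` with `|d n| < 1/√n`.

* **Generalised polynomial.** For `n > 0`, membership in `E` says `n * d n ^ 2 < 1`. Since `√2` is
  irrational, `d n` vanishes only at `n = 0`, so `n * d n ^ 2` is negative for `n < 0`. Hence, on all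
  of `ℤ`, `E` is `{n ≠ 0 : ⌊n * d n ^ 2⌋ = 0}`; no separate sign condition is
  needed. The zero set of an integer-valued generalised polynomial `F` is generalised polynomial, as `1 + ⌊√2 F⌋ + ⌊-√2 F⌋` is its characteristic function.
* **Density zero.** `√2` is badly approximable: `|h√2 - k| ≥ 1/(4h)` for integers `h > 0` and `k`.
  Two elements of `E` beyond `64 H ^ 2` at distance `h < H` would give `|h√2 - k| < 1/(4H)`, so
  consecutive elements of `E` are eventually at distance at least `H`, for each `H`.
* **Multiples.** The Pell equation `a ^ 2 - 2 b ^ 2 = 1` has solutions with `b > r ^ 3`, and then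
  `|k b √2 - k a| ≤ k / b < 1 / √(k b)` for `1 ≤ k ≤ r`.
-/

open Filter Finset Pointwise

/-- Generalised polynomials: the smallest class of functions `ℤ → ℝ` containing the
polynomial maps (with real coefficients) and closed under pointwise addition,
multiplication, and taking the integer part. -/
inductive IsGenPoly : (ℤ → ℝ) → Prop
  | poly (p : Polynomial ℝ) : IsGenPoly fun n => p.eval (n : ℝ)
  | add {f g : ℤ → ℝ} : IsGenPoly f → IsGenPoly g → IsGenPoly (f + g)
  | mul {f g : ℤ → ℝ} : IsGenPoly f → IsGenPoly g → IsGenPoly (f * g)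
  | floor {f : ℤ → ℝ} : IsGenPoly f → IsGenPoly fun n => (⌊f n⌋ : ℝ)

/-- A set of integers is generalised polynomial if its characteristic function is. -/
def IsGenPolySet (E : Set ℤ) : Prop :=
  IsGenPoly (E.indicator fun _ => (1 : ℝ))

/-- A set of natural numbers, viewed inside `ℤ`, is generalised polynomial if its
characteristic function is. -/
def IsGenPolyNatSet (E : Set ℕ) : Prop :=
  IsGenPolySet ((fun m : ℕ => (m : ℤ)) '' E)

/-- A function `ℕ → ℝ` is a generalised polynomial if it is the restriction to `ℕ`
of a generalised polynomial `ℤ → ℝ`. -/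
def IsGenPolyNat (f : ℕ → ℝ) : Prop :=
  ∃ g : ℤ → ℝ, IsGenPoly g ∧ ∀ n : ℕ, g (n : ℤ) = f n

/-- `E ⊆ ℕ` has natural density zero. -/
def HasDensityZero (E : Set ℕ) : Prop :=
  Filter.Tendsto
    (fun N : ℕ => (∑ n ∈ Finset.range N, E.indicator (fun _ => (1 : ℝ)) n) / N)
    Filter.atTop (nhds 0)

/-- `E ⊆ ℕ` is an IP set: it contains all finite sums of some sequence of positive
integers. -/
def IsIPSet (E : Set ℕ) : Prop :=
  ∃ n : ℕ → ℕ, (∀ i, 0 < n i) ∧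
    ∀ α : Finset ℕ, α.Nonempty → (∑ i ∈ α, n i) ∈ E

/-- `E ⊆ ℕ` is an IPS set. -/
def IsIPSSet (E : Set ℕ) : Prop :=
  ∃ (n : ℕ → ℕ) (N : ℕ → ℕ) (t₀ : Finset ℕ → ℕ),
    (∀ i, 0 < n i) ∧
    ∀ α : Finset ℕ, α.Nonempty → ∀ t, t₀ α ≤ t → (∑ i ∈ α, n i) + N t ∈ E

/-- The distance from a real number to the nearest integer. -/
noncomputable def distNearestInt (r : ℝ) : ℝ := |r - round r|

/-! ### The set is generalised polynomial -/

lemma isGenPoly_const (c : ℝ) : IsGenPoly fun _ => c := by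
  simpa using IsGenPoly.poly (Polynomial.C c)

lemma isGenPoly_linear (c d : ℝ) : IsGenPoly fun n => (n : ℝ) * c + d := by
  convert IsGenPoly.poly (Polynomial.X * Polynomial.C c + Polynomial.C d) using 2 with n
  rw [Polynomial.eval_add, Polynomial.eval_mul, Polynomial.eval_X, Polynomial.eval_C,
    Polynomial.eval_C]

/-- For irrational `x`, the integers `⌊x⌋` and `⌊-x⌋` sum to `-1`; for `x = 0` they sum to `0`.
This turns the integer part into a zero test for integer-valued functions. -/
lemma floor_add_floor_neg (z : ℤ) :
    (⌊(z : ℝ) * √2⌋ : ℝ) + (⌊(z : ℝ) * (-√2)⌋ : ℝ) = if z = 0 then 0 else -1 := by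
  split_ifs with h
  · simp [h]
  · have hirr : Irrational ((z : ℝ) * √2) := irrational_sqrt_two.intCast_mul h
    rw [mul_neg, Int.floor_neg]
    have h1 : ⌈(z : ℝ) * √2⌉ = ⌊(z : ℝ) * √2⌋ + 1 := by
      rw [Int.ceil_eq_iff]
      push_cast
      refine ⟨?_, (Int.lt_floor_add_one _).le⟩
      have := lt_of_le_of_ne (Int.floor_le ((z : ℝ) * √2)) (hirr.ne_int _).symm
      linarith
    rw [h1]; push_cast; ring

/-- The characteristic function of the zero set of an integer-valued generalised polynomial. -/
lemma isGenPoly_zeroTest {F : ℤ → ℤ} (hF : IsGenPoly fun n => (F n : ℝ)) :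
    IsGenPoly fun n => if F n = 0 then 1 else 0 := by
  have h := ((isGenPoly_const 1).add (hF.mul (isGenPoly_const √2)).floor).add
    (hF.mul (isGenPoly_const (-√2))).floor
  convert h using 1
  funext n
  have := floor_add_floor_neg (F n)
  simp only [Pi.add_apply, Pi.mul_apply]
  rw [add_assoc, this]
  split_ifs <;> norm_num

/-- `n` times the squared signed distance from `n√2` to the nearest integer. -/
noncomputable def scaledSqDist (n : ℤ) : ℝ := n * ((n : ℝ) * √2 - round ((n : ℝ) * √2)) ^ 2

lemma isGenPoly_scaledSqDist : IsGenPoly scaledSqDist := by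
  have hd := (isGenPoly_linear √2 0).add
    ((isGenPoly_const (-1)).mul (isGenPoly_linear √2 (1 / 2)).floor)
  have h := (isGenPoly_linear 1 0).mul (hd.mul hd)
  convert h using 1
  funext n
  simp only [scaledSqDist, Pi.add_apply, Pi.mul_apply, round_eq]
  ring

lemma mem_iff_sq (n : ℕ) (hn : 0 < n) (x : ℝ) :
    distNearestInt x < 1 / √n ↔ (n : ℝ) * (x - round x) ^ 2 < 1 := by
  have hn' : (0 : ℝ) < n := by exact_mod_cast hn
  rw [distNearestInt, lt_div_iff₀ (Real.sqrt_pos.2 hn'), ← sq_lt_one_iff₀ (by positivity), mul_pow,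
    sq_abs, Real.sq_sqrt hn'.le, mul_comm]

/-- The floor of `scaledSqDist` vanishes only at nonnegative integers. -/
lemma floor_scaledSqDist_eq_zero_iff (n : ℤ) (hn : n ≠ 0) :
    ⌊scaledSqDist n⌋ = 0 ↔ 0 < n ∧ scaledSqDist n < 1 := by
  have hirr : Irrational ((n : ℝ) * √2) := irrational_sqrt_two.intCast_mul hn
  have hd : 0 < ((n : ℝ) * √2 - round ((n : ℝ) * √2)) ^ 2 := by
    have := sub_ne_zero.2 (hirr.ne_int (round ((n : ℝ) * √2)))
    positivity
  rw [Int.floor_eq_iff]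
  have : (0 : ℝ) ≤ scaledSqDist n ↔ 0 < n := by
    rw [scaledSqDist, mul_nonneg_iff_of_pos_right hd, Int.cast_nonneg_iff]
    omega
  simp [this]

lemma isGenPolyNatSet_sqrt2 :
    IsGenPolyNatSet {n : ℕ | 0 < n ∧ distNearestInt ((n : ℝ) * √2) < 1 / √n} := by
  classical
  have h0 : IsGenPoly fun n => (((fun n : ℤ => n) n : ℤ) : ℝ) := by
    simpa using isGenPoly_linear 1 0
  have h1 := (isGenPoly_const 1).add ((isGenPoly_const (-1)).mul (isGenPoly_zeroTest h0))
  have h := h1.mul (isGenPoly_zeroTest isGenPoly_scaledSqDist.floor)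
  unfold IsGenPolyNatSet IsGenPolySet
  convert h using 1
  funext n
  simp only [Pi.add_apply, Pi.mul_apply]
  by_cases hn : n = 0
  · subst hn
    simp
  · simp only [floor_scaledSqDist_eq_zero_iff n hn, hn, if_false, mul_zero, add_zero, one_mul]
    rw [Set.indicator_apply]
    refine if_congr ?_ rfl rfl
    constructor
    · rintro ⟨m, ⟨hm, hlt⟩, rfl⟩
      refine ⟨by simpa using hm, ?_⟩
      rw [mem_iff_sq m hm] at hlt
      simpa [scaledSqDist] using hlt
    · rintro ⟨hpos, hlt⟩
      lift n to ℕ using hpos.le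
      have hm : 0 < n := by exact_mod_cast hpos
      refine ⟨n, ⟨hm, ?_⟩, rfl⟩
      rw [mem_iff_sq n hm]
      simpa [scaledSqDist] using hlt

/-! ### Density zero -/

/-- `√2` is badly approximable. -/
lemma sqrt2_badly_approximable (h : ℕ) (hh : 0 < h) (k : ℤ) :
    1 / (4 * (h : ℝ)) ≤ |(h : ℝ) * √2 - k| := by
  have h1 : (1 : ℝ) ≤ h := by exact_mod_cast hh
  have hs : √2 ^ 2 = 2 := Real.sq_sqrt (by norm_num)
  have hs1 : √2 < 1.5 := by rw [Real.sqrt_lt' (by norm_num)]; norm_num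
  have hs0 : 0 < √2 := by positivity
  rw [div_le_iff₀ (by positivity)]
  by_contra! hlt
  set δ := |(h : ℝ) * √2 - k| with hδ
  have hδ0 : 0 ≤ δ := abs_nonneg _
  have hδ1 : δ < 1 := by nlinarith
  -- The nonzero integer `2 h ^ 2 - k ^ 2` factors as `(h√2 - k)(h√2 + k)`.
  have hne : 2 * (h : ℤ) ^ 2 - k ^ 2 ≠ 0 := by
    intro h0
    have h0' : ((h : ℝ) * √2 - k) * (h * √2 + k) = 0 := by
      have : (2 : ℝ) * h ^ 2 - k ^ 2 = 0 := by exact_mod_cast h0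
      linear_combination this + (h : ℝ) ^ 2 * hs
    have hirr : Irrational ((h : ℝ) * √2) := irrational_sqrt_two.natCast_mul hh.ne'
    rcases mul_eq_zero.1 h0' with h2 | h2
    · exact hirr.ne_int k (by linarith)
    · exact hirr.ne_int (-k) (by push_cast; linarith)
  have habs : (1 : ℝ) ≤ δ * |(h : ℝ) * √2 + k| := by
    rw [hδ, ← abs_mul]
    have : (1 : ℝ) ≤ |((2 * (h : ℤ) ^ 2 - k ^ 2 : ℤ) : ℝ)| := by
      exact_mod_cast Int.one_le_abs hne
    have heq : ((h : ℝ) * √2 - k) * (h * √2 + k) = ((2 * (h : ℤ) ^ 2 - k ^ 2 : ℤ) : ℝ) := by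
      push_cast
      linear_combination (h : ℝ) ^ 2 * hs
    rwa [heq]
  have hsum : |(h : ℝ) * √2 + k| ≤ 4 * h := by
    have := abs_lt.1 (hδ ▸ hδ1 : |(h : ℝ) * √2 - k| < 1)
    rw [abs_le]
    constructor <;> nlinarith
  nlinarith

/-- Two elements of the set beyond `64 H ^ 2` at distance less than `H` coincide. -/
lemma sqrt2_gap {H a b : ℕ} (hH : 0 < H) (ha : 64 * H ^ 2 ≤ a) (hab : a ≤ b) (hlt : b < a + H)
    (hda : distNearestInt ((a : ℝ) * √2) < 1 / √a)
    (hdb : distNearestInt ((b : ℝ) * √2) < 1 / √b) : a = b := by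
  by_contra hne
  obtain ⟨h, rfl⟩ := Nat.exists_eq_add_of_le hab
  have hh : 0 < h := by omega
  have hhH : (h : ℝ) ≤ H := by exact_mod_cast (by omega : h ≤ H)
  have hH' : (0 : ℝ) < H := by exact_mod_cast hH
  have hh' : (0 : ℝ) < h := by exact_mod_cast hh
  have key : ∀ n : ℕ, 64 * H ^ 2 ≤ n → 1 / √(n : ℝ) ≤ 1 / (8 * H) := by
    intro n hn
    apply one_div_le_one_div_of_le (by positivity)
    apply Real.le_sqrt_of_sq_le
    have : (64 : ℝ) * H ^ 2 ≤ n := by exact_mod_cast hn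
    linarith
  have h1 := hda.trans_le (key _ ha)
  have h2 := hdb.trans_le (key _ (by omega))
  have h3 := sqrt2_badly_approximable h hh
    (round (((a + h : ℕ) : ℝ) * √2) - round ((a : ℝ) * √2))
  have h4 : 1 / (4 * (H : ℝ)) ≤ 1 / (4 * h) := by gcongr
  have h5 : 1 / (4 * (H : ℝ)) = 1 / (8 * H) + 1 / (8 * H) := by field_simp; norm_num
  unfold distNearestInt at h1 h2
  have h6 := norm_sub_le ((((a + h : ℕ) : ℝ) * √2) - round (((a + h : ℕ) : ℝ) * √2))
    ((a : ℝ) * √2 - round ((a : ℝ) * √2))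
  have h7 : (((a + h : ℕ) : ℝ) * √2) - round (((a + h : ℕ) : ℝ) * √2) -
      ((a : ℝ) * √2 - round ((a : ℝ) * √2)) =
      (h : ℝ) * √2 - ((round (((a + h : ℕ) : ℝ) * √2) - round ((a : ℝ) * √2) : ℤ) : ℝ) := by
    push_cast; ring
  rw [h7] at h6
  simp only [Real.norm_eq_abs] at h6
  linarith

/-- Sorting the elements beyond `64 H ^ 2` into blocks of length `H` bounds their number. -/
lemma sqrt2_count (H N : ℕ) (hH : 0 < H) :
    ∑ n ∈ range N, ({n : ℕ | 0 < n ∧ distNearestInt ((n : ℝ) * √2) < 1 / √n}).indicator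
      (fun _ => (1 : ℝ)) n ≤ 64 * H ^ 2 + 1 + N / H := by
  classical
  set E := {n : ℕ | 0 < n ∧ distNearestInt ((n : ℝ) * √2) < 1 / √n} with hE
  have hsum : ∑ n ∈ range N, E.indicator (fun _ => (1 : ℝ)) n = #{n ∈ range N | n ∈ E} := by
    rw [← Finset.sum_boole]
    exact Finset.sum_congr rfl fun n _ => by by_cases h : n ∈ E <;> simp [h]
  have hsub : {n ∈ range N | n ∈ E} ⊆
      range (64 * H ^ 2) ∪ {n ∈ range N | n ∈ E ∧ 64 * H ^ 2 ≤ n} := by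
    intro n hn
    simp only [Finset.mem_union, Finset.mem_filter, Finset.mem_range] at hn ⊢
    by_cases h : n < 64 * H ^ 2
    · exact Or.inl h
    · exact Or.inr ⟨hn.1, hn.2, by omega⟩
  have hcard : #{n ∈ range N | n ∈ E ∧ 64 * H ^ 2 ≤ n} ≤ #(range (N / H + 1)) := by
    apply Finset.card_le_card_of_injOn (fun n => n / H)
    · intro n hn
      simp only [Finset.coe_filter, Finset.mem_range, Set.mem_ofPred_eq] at hn
      simp only [Finset.coe_range, Set.mem_Iio]
      exact Nat.lt_succ_of_le (Nat.div_le_div_right hn.1.le)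
    · intro a ha b hb hab
      simp only [Finset.coe_filter, Finset.mem_range, Set.mem_ofPred_eq] at ha hb hab
      have ea := Nat.div_add_mod a H
      have eb := Nat.div_add_mod b H
      rw [hab] at ea
      have la := Nat.mod_lt a hH
      have lb := Nat.mod_lt b hH
      rcases le_total a b with hle | hle
      · exact sqrt2_gap hH ha.2.2 hle (by omega) ha.2.1.2 hb.2.1.2
      · exact (sqrt2_gap hH hb.2.2 hle (by omega) hb.2.1.2 ha.2.1.2).symm
  have htot : #{n ∈ range N | n ∈ E} ≤ 64 * H ^ 2 + (N / H + 1) := by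
    refine (Finset.card_le_card hsub).trans ((Finset.card_union_le _ _).trans ?_)
    simp only [Finset.card_range] at hcard ⊢
    omega
  have hdiv : ((N / H : ℕ) : ℝ) ≤ N / H := Nat.cast_div_le
  have htot' : (#{n ∈ range N | n ∈ E} : ℝ) ≤ 64 * H ^ 2 + ((N / H : ℕ) + 1) := by
    exact_mod_cast htot
  rw [hsum]
  linarith

lemma hasDensityZero_sqrt2 :
    HasDensityZero {n : ℕ | 0 < n ∧ distNearestInt ((n : ℝ) * √2) < 1 / √n} := by
  unfold HasDensityZero
  rw [Metric.tendsto_atTop]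
  intro ε hε
  obtain ⟨H, hHε⟩ := exists_nat_gt (2 / ε)
  have hH' : (0 : ℝ) < H := lt_trans (by positivity) hHε
  have hH : 0 < H := by exact_mod_cast hH'
  obtain ⟨N₀, hN₀⟩ := exists_nat_gt ((64 * H ^ 2 + 1) * 2 / ε)
  refine ⟨N₀, fun N hN => ?_⟩
  have hNr : (64 * (H : ℝ) ^ 2 + 1) * 2 / ε < N := hN₀.trans_le (by exact_mod_cast hN)
  have hN0 : (0 : ℝ) < N := lt_trans (by positivity) hNr
  have hc := sqrt2_count H N hH
  rw [div_lt_iff₀ hε] at hNr hHε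
  rw [Real.dist_eq, sub_zero, abs_of_nonneg, div_lt_iff₀ hN0]
  · refine hc.trans_lt ?_
    have : (N : ℝ) / H < N * ε / 2 := by
      rw [div_lt_iff₀ hH']
      nlinarith
    linarith
  · exact div_nonneg (Finset.sum_nonneg fun n _ => Set.indicator_nonneg (fun _ _ => zero_le_one) n)
      hN0.le

/-! ### Multiples of Pell solutions -/

lemma exists_pell (B : ℕ) : ∃ a b : ℕ, B < b ∧ a ^ 2 = 2 * b ^ 2 + 1 := by
  induction B with
  | zero => exact ⟨3, 2, by norm_num, by norm_num⟩
  | succ B ih =>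
    obtain ⟨a, b, hB, h⟩ := ih
    exact ⟨3 * a + 4 * b, 2 * a + 3 * b, by omega, by nlinarith⟩

lemma exists_multiples (r : ℕ) : ∃ m : ℕ, 0 < m ∧ ∀ k : ℕ, 1 ≤ k → k ≤ r →
    k * m ∈ {n : ℕ | 0 < n ∧ distNearestInt ((n : ℝ) * √2) < 1 / √n} := by
  obtain ⟨a, b, hB, hab⟩ := exists_pell (r ^ 3)
  have hb : 0 < b := by omega
  refine ⟨b, hb, fun k hk hkr => ⟨Nat.mul_pos hk hb, ?_⟩⟩
  have hb' : (0 : ℝ) < b := by exact_mod_cast hb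
  have hk' : (0 : ℝ) < k := by exact_mod_cast hk
  have hs : √2 ^ 2 = 2 := Real.sq_sqrt (by norm_num)
  have hs1 : 1 ≤ √2 := by rw [Real.one_le_sqrt]; norm_num
  have habr : (a : ℝ) ^ 2 = 2 * b ^ 2 + 1 := by exact_mod_cast hab
  have hk3 : (k : ℝ) ^ 3 < b := by
    exact_mod_cast (Nat.pow_le_pow_left hkr 3).trans_lt hB
  have hclose : |(b : ℝ) * √2 - a| * b ≤ 1 := by
    have hprod : |(b : ℝ) * √2 - a| * ((b : ℝ) * √2 + a) = 1 := by
      rw [← abs_of_nonneg (by positivity : (0 : ℝ) ≤ (b : ℝ) * √2 + a), ← abs_mul]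
      have : ((b : ℝ) * √2 - a) * (b * √2 + a) = -1 := by
        linear_combination (b : ℝ) ^ 2 * hs - habr
      rw [this]; norm_num
    rw [← hprod]
    have ha0 : (0 : ℝ) ≤ a := by positivity
    gcongr
    nlinarith
  have hle : distNearestInt (((k * b : ℕ) : ℝ) * √2) ≤ k * |(b : ℝ) * √2 - a| := by
    refine (round_le _ ((k * a : ℕ) : ℤ)).trans_eq ?_
    have hfac : ((k * b : ℕ) : ℝ) * √2 - (((k * a : ℕ) : ℤ) : ℝ) = k * (b * √2 - a) := by
      push_cast; ring
    rw [hfac, abs_mul, abs_of_pos hk']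
  refine hle.trans_lt ?_
  have hkb : (0 : ℝ) < ((k * b : ℕ) : ℝ) := by exact_mod_cast Nat.mul_pos hk hb
  rw [lt_div_iff₀ (Real.sqrt_pos.2 hkb), ← sq_lt_one_iff₀ (by positivity), mul_pow,
    Real.sq_sqrt hkb.le]
  push_cast
  -- The left side is `k ^ 3 / b` times `(|b√2 - a| b) ^ 2 ≤ 1`.
  set δ := |(b : ℝ) * √2 - a| with hδ
  have hδ0 : 0 ≤ δ := abs_nonneg _
  have h1 : (δ * b) ^ 2 ≤ 1 := pow_le_one₀ (by positivity) hclose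
  have h2 : (k * δ) ^ 2 * (k * b) * b < b := by
    calc (k * δ) ^ 2 * (k * b) * b = (k : ℝ) ^ 3 * (δ * b) ^ 2 := by ring
      _ ≤ (k : ℝ) ^ 3 * 1 := by gcongr
      _ < b := by linarith
  refine lt_of_mul_lt_mul_right ?_ hb'.le
  linarith

/-- `E = {n ∈ ℕ : ‖n√2‖ < 1/√n}` is a sparse generalised polynomial set
which contains the set `{km : 1 ≤ k ≤ r}` for some `m`, for every `r`; in particular
it contains an `IP_r` set for every `r`. -/
theorem sqrt2_example :
    IsGenPolyNatSet {n : ℕ | 0 < n ∧ distNearestInt ((n : ℝ) * Real.sqrt 2) < 1 / Real.sqrt n} ∧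
    HasDensityZero {n : ℕ | 0 < n ∧ distNearestInt ((n : ℝ) * Real.sqrt 2) < 1 / Real.sqrt n} ∧
    ∀ r : ℕ, ∃ m : ℕ, 0 < m ∧ ∀ k : ℕ, 1 ≤ k → k ≤ r →
      k * m ∈ {n : ℕ | 0 < n ∧ distNearestInt ((n : ℝ) * Real.sqrt 2) < 1 / Real.sqrt n} := by
  exact ⟨isGenPolyNatSet_sqrt2, hasDensityZero_sqrt2, exists_multiples⟩
end

section
/- Suppose E ⊆ ℕ is an IPS set. Then for any finite partition E = E₁ ∪ E₂ ∪ … ∪ E_r, at least one of the sets E_j is an IPS set. -/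
/-!
Fix an ultrafilter `U` on `ℕ` finer than the cofinite filter. If `n`, `N`, `t₀` witness that `E` is
IPS, then every finite sum `m` of the `n i` satisfies `m + N t ∈ E` for all large `t`, hence
`m + N t ∈ E_j` for `U`-almost all `t`, for some `j` depending on `m`. This colours the finite sums
of `n` with finitely many colours, so Hindman's theorem (`Hindman.FS_partition_regular`) gives a
sequence `b` all of whose finite sums have one colour `j`. For each `k` only finitely many
`U`-large conditions come from the nonempty sets `α ⊆ {0, …, k - 1}`, so some `τ k` meets all of
them; then `b` and `N ∘ τ` witness that `E_j` is IPS, with threshold `max α + 1`.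
-/

open Filter Finset Pointwise

/-- Every element of Mathlib's inductively defined `FS a` is a sum over a nonempty index set. -/
lemma exists_finset_sum_of_mem_FS (a : Stream' ℕ) (m : ℕ) (h : m ∈ Hindman.FS a) :
    ∃ α : Finset ℕ, α.Nonempty ∧ m = ∑ i ∈ α, a.get i := by
  induction h with
  | head' a => exact ⟨{0}, by simp, by simp [Stream'.head]⟩
  | tail' a m _ ih =>
    obtain ⟨α, hα, rfl⟩ := ih
    exact ⟨α.map (addRightEmbedding 1), by simpa using hα, by simp [Stream'.get_tail]⟩
  | cons' a m _ ih =>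
    obtain ⟨α, hα, rfl⟩ := ih
    refine ⟨insert 0 (α.map (addRightEmbedding 1)), by simp, ?_⟩
    rw [Finset.sum_insert (by simp)]
    simp [Stream'.get_tail, Stream'.head]

/-- partition regularity of IPS sets. -/
theorem IPS_partition_regular (E : Set ℕ) (hE : IsIPSSet E)
    (r : ℕ) (Es : Fin r → Set ℕ) (hcover : E = ⋃ j, Es j) :
    ∃ j, IsIPSSet (Es j) := by
  obtain ⟨n, N, t₀, hpos, hn⟩ := hE
  let U : Ultrafilter ℕ := Filter.hyperfilter ℕ
  -- Positivity is built into the colour classes so that Hindman's sequence `b` is positive.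
  let A : Fin r → Set ℕ := fun j => {m | 0 < m ∧ ∀ᶠ t in (U : Filter ℕ), m + N t ∈ Es j}
  have hcov : Hindman.FS (n : Stream' ℕ) ⊆ ⋃₀ Set.range A := by
    intro m hm
    obtain ⟨α, hα, rfl⟩ := exists_finset_sum_of_mem_FS _ _ hm
    have hlarge : ∀ᶠ t in (U : Filter ℕ), (∑ i ∈ α, n i) + N t ∈ ⋃ j, Es j := by
      have h : ∀ᶠ t in Filter.atTop, (∑ i ∈ α, n i) + N t ∈ ⋃ j, Es j := by
        filter_upwards [Filter.eventually_ge_atTop (t₀ α)] with t ht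
        exact hcover ▸ hn α hα t ht
      rw [← Nat.cofinite_eq_atTop] at h
      exact h.filter_mono Filter.hyperfilter_le_cofinite
    simp only [Set.mem_iUnion] at hlarge
    obtain ⟨j, hj⟩ := Ultrafilter.eventually_exists_iff.mp hlarge
    exact ⟨A j, ⟨j, rfl⟩, Finset.sum_pos (fun i _ => hpos i) hα, hj⟩
  obtain ⟨_, ⟨j, rfl⟩, b, hb⟩ :=
    Hindman.FS_partition_regular (n : Stream' ℕ) _ (Set.finite_range A) hcov
  have hτ : ∀ k : ℕ, ∃ t, ∀ α ∈ (Finset.range k).powerset, α.Nonempty →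
      (∑ i ∈ α, b.get i) + N t ∈ Es j := by
    intro k
    refine Filter.Eventually.exists (f := (U : Filter ℕ)) ?_
    rw [Filter.eventually_all_finset]
    intro α _
    by_cases hα : α.Nonempty
    · filter_upwards [(hb (Hindman.FS.finsetSum b α hα)).2] with t ht _
      exact ht
    · simp [hα]
  choose τ hτ using hτ
  refine ⟨j, b.get, N ∘ τ, fun α => α.sup id + 1,
    fun i => (hb (Hindman.FS.singleton b i)).1, fun α hα k hk => hτ k α ?_ hα⟩
  rw [Finset.mem_powerset]
  intro i hi
  have : i ≤ α.sup id := Finset.le_sup (f := id) hi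
  exact Finset.mem_range.mpr ((Nat.lt_succ_of_le this).trans_le hk)
end

section
/- Suppose A ⊆ ℝ^d is an algebraic set and P : ℝ^d → ℝ^d is a surjective polynomial map. If P⁻¹(A) ⊆ A, then P(A) = A. -/
/-!
The preimages `A ⊇ P⁻¹(A) ⊇ P⁻²(A) ⊇ ⋯` form a descending chain of algebraic sets, since
`P⁻ⁿ(A)` is cut out by the polynomials `p ∘ Pⁿ` with `p` in a defining family of `A`. By
Hilbert's basis theorem the ascending chain of vanishing ideals stabilizes, hence so does the chain
of sets: `P⁻ⁿ(A) = P⁻⁽ⁿ⁺¹⁾(A)` for some `n`. As `Pⁿ` is surjective, taking preimages under `Pⁿ` is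
injective on sets, so `A = P⁻¹(A)`, and applying the surjective `P` gives `P(A) = A`.
-/

open Filter Finset Pointwise

/-- Iterating the substitution `X i ↦ q i` on `p` represents the function `p ∘ Pⁿ`; this is what makes
the preimages `P⁻ⁿ(A)` algebraic. -/
lemma eval_iterate_bind₁ {d : ℕ} {P : (Fin d → ℝ) → (Fin d → ℝ)}
    {q : Fin d → MvPolynomial (Fin d) ℝ}
    (hq : ∀ (x : Fin d → ℝ) (i : Fin d), P x i = MvPolynomial.eval x (q i))
    (p : MvPolynomial (Fin d) ℝ) (n : ℕ) (x : Fin d → ℝ) :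
    MvPolynomial.eval x ((MvPolynomial.bind₁ q)^[n] p) = MvPolynomial.eval (P^[n] x) p := by
  induction n generalizing x with
  | zero => rfl
  | succ n ih =>
    have hPx : (fun i => MvPolynomial.eval x (q i)) = P x := funext fun i => (hq x i).symm
    rw [Function.iterate_succ_apply', Function.iterate_succ_apply, ← ih (P x), ← hPx]
    exact MvPolynomial.eval₂Hom_bind₁ _ _ _ _

/-- an algebraic set `A ⊆ ℝ^d` with `P⁻¹(A) ⊆ A` for a surjective
polynomial map `P` satisfies `P(A) = A`. -/
theorem algebraic_invariant_set {d : ℕ} (A : Set (Fin d → ℝ))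
    (hA : ∃ S : Set (MvPolynomial (Fin d) ℝ),
      A = {x : Fin d → ℝ | ∀ p ∈ S, MvPolynomial.eval x p = 0})
    (P : (Fin d → ℝ) → (Fin d → ℝ))
    (hP : ∃ q : Fin d → MvPolynomial (Fin d) ℝ,
      ∀ (x : Fin d → ℝ) (i : Fin d), P x i = MvPolynomial.eval x (q i))
    (hsurj : Function.Surjective P)
    (hinv : P ⁻¹' A ⊆ A) :
    P '' A = A := by
  obtain ⟨S, hS⟩ := hA
  obtain ⟨q, hq⟩ := hP
  have hmono : Monotone fun n : ℕ =>
      MvPolynomial.vanishingIdeal ℝ (P^[n] ⁻¹' A) := by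
    refine monotone_nat_of_le_succ fun n => MvPolynomial.vanishingIdeal_anti_mono fun x hx => ?_
    have hx' : P^[n + 1] x ∈ A := hx
    rw [Function.iterate_succ_apply'] at hx'
    exact hinv hx'
  obtain ⟨n, hn⟩ := monotone_stabilizes_iff_noetherian.mpr
    (inferInstance : IsNoetherian (MvPolynomial (Fin d) ℝ) (MvPolynomial (Fin d) ℝ)) ⟨_, hmono⟩
  have hstab : MvPolynomial.vanishingIdeal ℝ (P^[n] ⁻¹' A) =
      MvPolynomial.vanishingIdeal ℝ (P^[n + 1] ⁻¹' A) := hn (n + 1) n.le_succ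
  have hpre : A ⊆ P ⁻¹' A := by
    intro y hy
    obtain ⟨x, rfl⟩ := hsurj.iterate n y
    rw [Set.mem_preimage, ← Function.iterate_succ_apply' P n x, hS]
    intro p hp
    rw [← eval_iterate_bind₁ hq]
    have hmem : (MvPolynomial.bind₁ q)^[n + 1] p ∈
        MvPolynomial.vanishingIdeal ℝ (P^[n + 1] ⁻¹' A) := by
      rw [MvPolynomial.mem_vanishingIdeal_iff]
      intro z hz
      rw [MvPolynomial.aeval_eq_eval, eval_iterate_bind₁ hq]
      rw [Set.mem_preimage, hS] at hz
      exact hz p hp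
    rw [← hstab, MvPolynomial.mem_vanishingIdeal_iff] at hmem
    simpa [MvPolynomial.aeval_eq_eval] using hmem x hy
  conv_lhs => rw [Set.Subset.antisymm hpre hinv]
  exact Set.image_preimage_eq A hsurj
end

section
/- Let h : ℕ₀ → ℝ be a generalised polynomial. Then the function g defined by g(n) = 1 if h(n) = 0 and g(n) = 0 otherwise is a generalised polynomial. Moreover, for any real numbers a < b, the function g' defined by g'(n) = 1 if a ≤ h(n) < b and g'(n) = 0 otherwise is a generalised polynomial. -/
/-!
For an integer `m` and the irrational number `√2`, the fractional part of `√2 * m` lies in `[0, 1)`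
and vanishes exactly when `m = 0`. Hence `⌊1 - fract (√2 * m)⌋ = ⌊1 - √2 * m + ⌊√2 * m⌋⌋` is `1`
if `m = 0` and `0` otherwise: the indicator of zero on the integers is given by a formula in sums,
products and floors (`floor_one_sub_fract_sqrt_two_mul`).

The two claims reduce to this one: `a ≤ x < b` if and only if `⌊(x - a) / (b - a)⌋ = 0`, and
`x = 0` if and only if `⌊x⌋ = 0` and `⌊-x⌋ = 0`.
-/

open Filter Finset Pointwise

namespace IsGenPoly

lemma const (c : ℝ) : IsGenPoly fun _ => c := by
  simpa using IsGenPoly.poly (Polynomial.C c)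

lemma const_mul {f : ℤ → ℝ} (hf : IsGenPoly f) (c : ℝ) : IsGenPoly fun n => c * f n :=
  (const c).mul hf

lemma add_const {f : ℤ → ℝ} (hf : IsGenPoly f) (c : ℝ) : IsGenPoly fun n => f n + c :=
  hf.add (const c)

end IsGenPoly

lemma floor_one_sub_fract_sqrt_two_mul (m : ℤ) :
    ⌊1 - Int.fract (√2 * m)⌋ = if m = 0 then 1 else 0 := by
  split_ifs with hm
  · simp [hm]
  · have hirr : Irrational (√2 * m) := irrational_sqrt_two.mul_intCast hm
    have hne : Int.fract (√2 * m) ≠ 0 := fun h0 =>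
      hirr.ne_int ⌊√2 * m⌋ (by linarith [Int.floor_add_fract (√2 * m)])
    have hpos := lt_of_le_of_ne (Int.fract_nonneg (√2 * m)) hne.symm
    have hlt := Int.fract_lt_one (√2 * m)
    rw [Int.floor_eq_zero_iff]
    constructor <;> linarith

lemma IsGenPoly.indicator_floor_eq_zero {f : ℤ → ℝ} (hf : IsGenPoly f) :
    IsGenPoly fun n => if ⌊f n⌋ = 0 then (1 : ℝ) else 0 := by
  have hs : IsGenPoly fun n => √2 * (⌊f n⌋ : ℝ) := hf.floor.const_mul _
  have key := (((hs.const_mul (-1)).add hs.floor).add_const 1).floor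
  convert key using 2 with n
  have h1 := floor_one_sub_fract_sqrt_two_mul ⌊f n⌋
  have h2 : (-1 * (√2 * (⌊f n⌋ : ℝ)) + (⌊√2 * (⌊f n⌋ : ℝ)⌋ : ℝ)) + 1
      = 1 - Int.fract (√2 * (⌊f n⌋ : ℝ)) := by
    rw [Int.fract]; ring
  simp only [Pi.add_apply]
  rw [h2, h1]
  split_ifs <;> simp

lemma eq_zero_iff_floor_eq_zero (x : ℝ) : x = 0 ↔ ⌊x⌋ = 0 ∧ ⌊-1 * x⌋ = 0 := by
  constructor
  · rintro rfl
    simp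
  · rintro ⟨h1, h2⟩
    rw [Int.floor_eq_zero_iff, Set.mem_Ico] at h1 h2
    linarith [h1.1, h2.1]

lemma mem_Ico_iff_floor_eq_zero {a b : ℝ} (hab : a < b) (x : ℝ) :
    (a ≤ x ∧ x < b) ↔ ⌊(b - a)⁻¹ * (x + -a)⌋ = 0 := by
  have hpos : 0 < b - a := sub_pos.2 hab
  rw [Int.floor_eq_zero_iff, Set.mem_Ico, mul_nonneg_iff_of_pos_left (inv_pos.2 hpos),
    inv_mul_lt_one₀ hpos]
  constructor <;> rintro ⟨h1, h2⟩ <;> constructor <;> linarith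

/-- indicator of the zero set (resp. of `a ≤ h(n) < b`) of a generalised
polynomial is a generalised polynomial. -/
theorem genPoly_zero_set_indicator (h : ℕ → ℝ) (hh : IsGenPolyNat h) :
    IsGenPolyNat (fun n => if h n = 0 then (1 : ℝ) else 0) ∧
    ∀ a b : ℝ, a < b →
      IsGenPolyNat (fun n => if a ≤ h n ∧ h n < b then (1 : ℝ) else 0) := by
  obtain ⟨g, hg, hgh⟩ := hh
  refine ⟨⟨_, hg.indicator_floor_eq_zero.mul (hg.const_mul (-1)).indicator_floor_eq_zero,
    fun n => ?_⟩, fun a b hab => ⟨_,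
    ((hg.add_const (-a)).const_mul (b - a)⁻¹).indicator_floor_eq_zero, fun n => ?_⟩⟩
  · simp only [Pi.mul_apply, hgh, eq_zero_iff_floor_eq_zero (h n), ite_and]
    split_ifs <;> simp
  · simp only [hgh, mem_Ico_iff_floor_eq_zero hab]
end

section
/- Let a ∈ ℕ be a positive integer and let (n_i)_{i≥0} be the sequence of integers defined by n₀ = 0, n₁ = 1, and n_{i+2} = a·n_{i+1} + n_i. Then the set E = { n_i : i ∈ ℕ₀ } is a generalised polynomial set. (For a = 1 this is the set of Fibonacci numbers.) -/
/-!
Let `θ > 1` be the positive root of `x² = a x + 1`, and `σ = θ - a = 1 / θ`. The form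
`form a m k = k² - a k m - m²` factors as `(k - θ m) (k + σ m)`. It takes the value `(-1) ^ i` at
`(m, k) = (n i, n (i + 1))`, where `n (i + 1) - θ n i = (-σ) ^ i` lies in `[-1, 1]`. Hence
`n (i + 1)` is `⌊θ n i⌋` for odd `i` and `⌊θ n i⌋ + 1` for even `i`. Conversely, a descent
`(m, k) ↦ (k - a m, m)` shows that every pair with `m ≥ 0`, `k > 0` on which the form is `±1` is a
pair of consecutive terms. So `m` is a term if and only if `form a m ⌊θ m⌋ = -1` or
`form a m (⌊θ m⌋ + 1) = 1` (`mem_iff`); the correlation between the sign of the form and the side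
from which `θ m` is approximated is what excludes negative `m`.

This condition is the vanishing of one integer-valued generalised polynomial `P`, and the indicator
of `P = 0` is `1 + ⌊√2 P⌋ + ⌊-√2 P⌋`, because `√2 P` is an integer only if `P = 0`.
-/

open Filter Finset Pointwise

lemma isGenPoly_id : IsGenPoly fun m => (m : ℝ) := by
  simpa using IsGenPoly.poly Polynomial.X

/-- The vanishing locus of an integer-valued generalised polynomial is a generalised polynomial
set. -/
lemma isGenPoly_eq_zero (P : ℤ → ℤ) (hP : IsGenPoly fun m => (P m : ℝ)) :
    IsGenPoly ({m | P m = 0}.indicator fun _ => (1 : ℝ)) := by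
  have h := ((isGenPoly_const 1).add ((isGenPoly_const √2).mul hP).floor).add
    ((isGenPoly_const (-√2)).mul hP).floor
  convert h using 1
  funext m
  simp only [Set.indicator_apply, Set.mem_ofPred_eq, Pi.add_apply, Pi.mul_apply]
  split_ifs with h0
  · simp [h0]
  · have hirr : Irrational (√2 * P m) := irrational_sqrt_two.mul_intCast h0
    have hne : (⌊√2 * P m⌋ : ℝ) ≠ √2 * P m := fun e => hirr.ne_int _ e.symm
    have hlt : (⌊√2 * P m⌋ : ℝ) < √2 * P m := lt_of_le_of_ne (Int.floor_le _) hne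
    have hneg : ⌊-√2 * (P m : ℝ)⌋ = -⌊√2 * P m⌋ - 1 := by
      rw [Int.floor_eq_iff]
      push_cast
      constructor <;> linarith [Int.lt_floor_add_one (√2 * (P m : ℝ))]
    rw [hneg]
    push_cast
    ring

/-- The quadratic form `k² - a k m - m²`, the norm of `k - θ m` where `θ² = a θ + 1`. -/
def form (a : ℕ) (m k : ℤ) : ℤ := k ^ 2 - a * k * m - m ^ 2

lemma isGenPoly_form (a : ℕ) {k : ℤ → ℝ} (hk : IsGenPoly k) :
    IsGenPoly fun m => k m ^ 2 - a * k m * m - (m : ℝ) ^ 2 := by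
  have h := ((hk.mul hk).add (((isGenPoly_const (-a)).mul hk).mul isGenPoly_id)).add
    (((isGenPoly_const (-1)).mul isGenPoly_id).mul isGenPoly_id)
  convert h using 1
  funext m
  simp only [Pi.add_apply, Pi.mul_apply]
  ring

lemma exists_theta (a : ℕ) (ha : 0 < a) : ∃ θ : ℝ, (a : ℝ) < θ ∧ θ ^ 2 = a * θ + 1 := by
  have hs : √((a : ℝ) ^ 2 + 4) ^ 2 = (a : ℝ) ^ 2 + 4 := Real.sq_sqrt (by positivity)
  have ha' : (0 : ℝ) < a := by exact_mod_cast ha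
  have hlt : (a : ℝ) < √((a : ℝ) ^ 2 + 4) := Real.lt_sqrt_of_sq_lt (by linarith)
  exact ⟨(a + √((a : ℝ) ^ 2 + 4)) / 2, by linarith, by linarith⟩

/-- Descent: a pair on which the form is `±1` consists of consecutive terms, because
`(m, k) ↦ (k - a m, m)` negates the form and undoes one step of the recurrence. -/
lemma descent (a : ℕ) (ha : 0 < a) (n : ℕ → ℤ) (h0 : n 0 = 0) (h1 : n 1 = 1)
    (hrec : ∀ i : ℕ, n (i + 2) = a * n (i + 1) + n i) (s : ℕ) :
    ∀ m k : ℤ, 0 ≤ m → 0 < k → m + k ≤ s → (form a m k = 1 ∨ form a m k = -1) →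
      ∃ i, m = n i ∧ k = n (i + 1) := by
  induction s with
  | zero => intro m k hm hk hs; push_cast at hs; omega
  | succ s ih =>
    intro m k hm hk hs hf
    have ha' : (1 : ℤ) ≤ a := by exact_mod_cast ha
    rcases hm.eq_or_lt with rfl | hm
    · refine ⟨0, h0.symm, ?_⟩
      simp only [form] at hf
      rw [zero_add, h1]
      rcases hf with hf | hf <;> nlinarith
    · have hm' : 0 ≤ k - a * m := by
        by_contra! hlt
        simp only [form] at hf
        have : k * (k - a * m) ≤ -k := by nlinarith
        rcases hf with hf | hf <;> nlinarith
      have hflip : form a (k - a * m) m = -form a m k := by simp only [form]; ring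
      obtain ⟨i, hi, hi'⟩ := ih (k - a * m) m hm' hm (by push_cast at hs; nlinarith)
        (by rw [hflip]; omega)
      refine ⟨i + 1, hi', ?_⟩
      rw [hrec, ← hi', ← hi]
      ring

lemma form_seq (a : ℕ) (n : ℕ → ℤ) (h0 : n 0 = 0) (h1 : n 1 = 1)
    (hrec : ∀ i : ℕ, n (i + 2) = a * n (i + 1) + n i) (i : ℕ) :
    form a (n i) (n (i + 1)) = (-1) ^ i := by
  induction i with
  | zero => simp [form, h0, h1]
  | succ i ih =>
    rw [pow_succ, ← ih, hrec]
    simp only [form]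
    ring

lemma approx_seq (a : ℕ) (n : ℕ → ℤ) (h0 : n 0 = 0) (h1 : n 1 = 1)
    (hrec : ∀ i : ℕ, n (i + 2) = a * n (i + 1) + n i) (θ : ℝ) (hθ : θ ^ 2 = a * θ + 1) (i : ℕ) :
    (n (i + 1) : ℝ) - θ * n i = (-1) ^ i * (θ - a) ^ i := by
  induction i with
  | zero => simp [h0, h1]
  | succ i ih =>
    rw [hrec]
    push_cast
    linear_combination (-(θ - a)) * ih - (n i : ℝ) * hθ

/-- Membership in the sequence in terms of the form at the two integers next to `θ m`. -/
lemma mem_iff (a : ℕ) (ha : 0 < a) (n : ℕ → ℤ) (h0 : n 0 = 0) (h1 : n 1 = 1)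
    (hrec : ∀ i : ℕ, n (i + 2) = a * n (i + 1) + n i) (θ : ℝ) (hθ1 : (a : ℝ) < θ)
    (hθ : θ ^ 2 = a * θ + 1) (m : ℤ) :
    (∃ i, m = n i) ↔ form a m ⌊θ * m⌋ = -1 ∨ form a m (⌊θ * m⌋ + 1) = 1 := by
  have ha' : (1 : ℝ) ≤ a := by exact_mod_cast ha
  have hθσ : θ * (θ - a) = 1 := by linarith
  have hσ0 : 0 < θ - a := by linarith
  have hσ1 : θ - a < 1 := by nlinarith
  have hfac (k : ℤ) : ((form a m k : ℤ) : ℝ) = (k - θ * m) * (k + (θ - a) * m) := by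
    simp only [form]
    push_cast
    linear_combination (m : ℝ) ^ 2 * hθσ
  constructor
  · rintro ⟨i, rfl⟩
    have hf := form_seq a n h0 h1 hrec i
    have he := approx_seq a n h0 h1 hrec θ hθ i
    have hpos : 0 < (θ - a) ^ i := pow_pos hσ0 i
    have hle : (θ - a) ^ i ≤ 1 := pow_le_one₀ hσ0.le hσ1.le
    rcases Nat.even_or_odd i with hi | hi
    · right
      have hfl : ⌊θ * (n i : ℝ)⌋ = n (i + 1) - 1 := by
        rw [hi.neg_one_pow] at he
        rw [Int.floor_eq_iff]
        push_cast
        constructor <;> linarith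
      rw [hfl, sub_add_cancel, hf, hi.neg_one_pow]
    · left
      have hlt : (θ - a) ^ i < 1 := pow_lt_one₀ hσ0.le hσ1 hi.pos.ne'
      have hfl : ⌊θ * (n i : ℝ)⌋ = n (i + 1) := by
        rw [hi.neg_one_pow] at he
        rw [Int.floor_eq_iff]
        constructor <;> linarith
      rw [hfl, hf, hi.neg_one_pow]
  · have hl := Int.floor_le (θ * (m : ℝ))
    have hu := Int.lt_floor_add_one (θ * (m : ℝ))
    rintro (h | h)
    · have hf := hfac ⌊θ * (m : ℝ)⌋
      rw [h] at hf
      push_cast at hf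
      have hm : 0 < m := by
        by_contra! hm
        have hm' : (m : ℝ) ≤ 0 := by exact_mod_cast hm
        have h2 : (⌊θ * (m : ℝ)⌋ : ℝ) + (θ - a) * m ≤ 0 := by nlinarith
        nlinarith [mul_nonneg_of_nonpos_of_nonpos (sub_nonpos.2 hl) h2]
      have hm' : (1 : ℝ) ≤ m := by exact_mod_cast hm
      have hk : 0 < ⌊θ * (m : ℝ)⌋ := Int.floor_pos.2 (by nlinarith)
      obtain ⟨i, hi, -⟩ := descent a ha n h0 h1 hrec (m + ⌊θ * (m : ℝ)⌋).toNat m _ hm.le hk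
        (Int.self_le_toNat _) (Or.inr h)
      exact ⟨i, hi⟩
    · have hf := hfac (⌊θ * (m : ℝ)⌋ + 1)
      rw [h] at hf
      push_cast at hf
      have hm : 0 ≤ m := by
        by_contra! hm
        have hm' : (m : ℝ) ≤ -1 := by exact_mod_cast Int.le_sub_one_of_lt hm
        have h2 : (⌊θ * (m : ℝ)⌋ : ℝ) + 1 + (θ - a) * m ≤ 0 := by nlinarith
        nlinarith [mul_nonneg (sub_nonneg.2 hu.le) (neg_nonneg.2 h2)]
      have hm' : (0 : ℝ) ≤ m := by exact_mod_cast hm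
      have hk : 0 ≤ ⌊θ * (m : ℝ)⌋ := Int.floor_nonneg.2 (mul_nonneg (by linarith) hm')
      obtain ⟨i, hi, -⟩ := descent a ha n h0 h1 hrec (m + (⌊θ * (m : ℝ)⌋ + 1)).toNat m _ hm
        (by omega) (Int.self_le_toNat _) (Or.inl h)
      exact ⟨i, hi⟩

/-- the set of values of the sequence `n₀ = 0`, `n₁ = 1`,
`n_{i+2} = a n_{i+1} + n_i` is a generalised polynomial set. -/
theorem fibonacci_like_genPoly (a : ℕ) (ha : 0 < a) (n : ℕ → ℤ)
    (h0 : n 0 = 0) (h1 : n 1 = 1)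
    (hrec : ∀ i : ℕ, n (i + 2) = a * n (i + 1) + n i) :
    IsGenPolySet {m : ℤ | ∃ i : ℕ, m = n i} := by
  obtain ⟨θ, hθ1, hθ⟩ := exists_theta a ha
  have key := mem_iff a ha n h0 h1 hrec θ hθ1 hθ
  have hk : IsGenPoly fun m => ((⌊θ * m⌋ : ℤ) : ℝ) := ((isGenPoly_const θ).mul isGenPoly_id).floor
  have hk1 : IsGenPoly fun m => ((⌊θ * m⌋ : ℤ) : ℝ) + 1 := hk.add (isGenPoly_const 1)
  have hA := (isGenPoly_form a hk).add (isGenPoly_const 1)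
  have hB := (isGenPoly_form a hk1).add (isGenPoly_const (-1))
  have hP := isGenPoly_eq_zero (fun m => (form a m ⌊θ * m⌋ + 1) * (form a m (⌊θ * m⌋ + 1) - 1)) (by
    convert hA.mul hB using 1
    funext m
    simp only [form, Pi.add_apply, Pi.mul_apply]
    push_cast
    ring)
  unfold IsGenPolySet
  convert hP using 1
  congr 1
  ext m
  simp only [Set.mem_ofPred_eq, key m, mul_eq_zero]
  constructor
  · rintro (h | h)
    · exact Or.inl (by omega)
    · exact Or.inr (by omega)
  · rintro (h | h)
    · exact Or.inl (by omega)
    · exact Or.inr (by omega)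
end

section
/- Let p(x) be a real polynomial having at least one irrational coefficient, and let ε : ℕ → ℝ satisfy ε(n) → 0 as n → ∞. Then the set { n ∈ ℕ : ‖p(n)‖ < ε(n) } does not contain any IP set. -/
/-!
Distances to the nearest integer are norms in the circle `ℝ / ℤ`, so the hypothesis says that
`p (n) → 0` in the circle as `n → ∞` inside `FS (n_i)`. This forces every coefficient of `p` to be
rational, by induction on a bound for the degree.

If `p` is a constant `c`, then `c` is `0` in the circle, that is, an integer. If `deg p ≤ d + 1`,
put `m = n_0`. For `x` in the finite sums of the shifted sequence `(n_{i+1})`, both `x` and `m + x`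
lie in `FS (n_i)`, so `q (x) = p (x + m) - p (x)`, of degree at most `d`, also tends to `0` along
the shifted sequence. By induction its coefficient `(d + 1) m a_{d+1}` is rational, hence so is
`a_{d+1}`. With `D` the denominator of `a_{d+1}`, the polynomial `D p - D a_{d+1} X ^ (d+1)` has
degree at most `d` and tends to `0` along `FS (n_i)`, because `D a_{d+1} x ^ (d+1)` is an integer
at integers `x`. By induction its coefficients are rational, hence so are those of `p`.
-/

open Filter Finset Pointwise

/-- `p (x) → 0` in the circle `ℝ / ℤ` as `x → ∞` among the finite sums of the sequence `n`. -/
def SmallAlongFS (p : Polynomial ℝ) (n : ℕ → ℕ) : Prop :=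
  ∀ δ > (0 : ℝ), ∃ M : ℕ, ∀ α : Finset ℕ, α.Nonempty → M ≤ ∑ i ∈ α, n i →
    ‖((p.eval ((∑ i ∈ α, n i : ℕ) : ℝ) : ℝ) : UnitAddCircle)‖ < δ

lemma SmallAlongFS.taylor_sub {p : Polynomial ℝ} {n : ℕ → ℕ} (h : SmallAlongFS p n) :
    SmallAlongFS (Polynomial.taylor (n 0 : ℝ) p - p) (fun i => n (i + 1)) := by
  intro δ hδ
  obtain ⟨M, hM⟩ := h (δ / 2) (half_pos hδ)
  refine ⟨M, fun α hα hMα => ?_⟩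
  set x := ∑ i ∈ α, n (i + 1) with hx
  have e1 : ∑ i ∈ α.map (addRightEmbedding 1), n i = x := by simp [hx]
  have e2 : ∑ i ∈ insert 0 (α.map (addRightEmbedding 1)), n i = n 0 + x := by
    rw [Finset.sum_insert (by simp), e1]
  have h1 := hM (α.map (addRightEmbedding 1)) (by simpa using hα) (by rw [e1]; exact hMα)
  have h2 := hM (insert 0 (α.map (addRightEmbedding 1))) (Finset.insert_nonempty _ _)
    (by rw [e2]; omega)
  rw [e1] at h1
  rw [e2] at h2
  have e3 : (Polynomial.taylor (n 0 : ℝ) p - p).eval (x : ℝ)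
      = p.eval ((n 0 + x : ℕ) : ℝ) - p.eval (x : ℝ) := by
    rw [Polynomial.eval_sub, Polynomial.taylor_eval]
    push_cast
    rw [add_comm (x : ℝ)]
  rw [e3, AddCircle.coe_sub]
  calc _ ≤ _ := norm_sub_le _ _
    _ < δ / 2 + δ / 2 := add_lt_add h2 h1
    _ = δ := add_halves δ

lemma SmallAlongFS.clear_leading {p : Polynomial ℝ} {n : ℕ → ℕ} (h : SmallAlongFS p n)
    {D : ℕ} (hD : 0 < D) (z : ℤ) (k : ℕ) :
    SmallAlongFS (Polynomial.C (D : ℝ) * p - Polynomial.C (z : ℝ) * Polynomial.X ^ k) n := by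
  intro δ hδ
  have hD' : (0 : ℝ) < D := by exact_mod_cast hD
  obtain ⟨M, hM⟩ := h (δ / D) (by positivity)
  refine ⟨M, fun α hα hMα => ?_⟩
  have h1 := hM α hα hMα
  set x := ∑ i ∈ α, n i
  have e : (((Polynomial.C (D : ℝ) * p - Polynomial.C (z : ℝ) * Polynomial.X ^ k).eval (x : ℝ) : ℝ)
      : UnitAddCircle) = D • ((p.eval (x : ℝ) : ℝ) : UnitAddCircle) := by
    have h0 : (((z : ℝ) * (x : ℝ) ^ k : ℝ) : UnitAddCircle) = 0 :=
      (AddCircle.coe_eq_zero_iff 1).2 ⟨z * (x : ℤ) ^ k, by simp⟩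
    simp only [Polynomial.eval_sub, Polynomial.eval_mul, Polynomial.eval_C, Polynomial.eval_pow,
      Polynomial.eval_X]
    rw [AddCircle.coe_sub, h0, sub_zero, ← nsmul_eq_mul, AddCircle.coe_nsmul]
  rw [e]
  calc _ ≤ D * ‖((p.eval (x : ℝ) : ℝ) : UnitAddCircle)‖ := norm_nsmul_le
    _ < D * (δ / D) := by gcongr
    _ = δ := by field_simp

lemma coeff_taylor_sub {p : Polynomial ℝ} {d : ℕ} (hp : p.natDegree ≤ d + 1) (m : ℝ) :
    (Polynomial.taylor m p - p).coeff d = (d + 1) * m * p.coeff (d + 1) := by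
  have h : (Polynomial.hasseDeriv d p).natDegree < 2 := by
    have := Polynomial.natDegree_hasseDeriv_le p d
    omega
  rw [Polynomial.coeff_sub, Polynomial.taylor_coeff, Polynomial.eval_eq_sum_range' h]
  simp [Finset.sum_range_succ, Polynomial.hasseDeriv_coeff, add_comm 1 d]
  ring

lemma natDegree_taylor_sub_le {p : Polynomial ℝ} {d : ℕ} (hp : p.natDegree ≤ d + 1) (m : ℝ) :
    (Polynomial.taylor m p - p).natDegree ≤ d := by
  rw [Polynomial.natDegree_le_iff_coeff_eq_zero]
  intro N hN
  obtain ⟨N, rfl⟩ : ∃ k, N = k + 1 := ⟨N - 1, by omega⟩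
  rw [coeff_taylor_sub (by omega), Polynomial.coeff_eq_zero_of_natDegree_lt (n := N + 1 + 1)
    (by omega), mul_zero]

/-- A polynomial that tends to `0` in the circle along the finite sums of a sequence of positive
integers has rational coefficients. -/
lemma rational_of_smallAlongFS (d : ℕ) : ∀ (p : Polynomial ℝ) (n : ℕ → ℕ), (∀ i, 0 < n i) →
    p.natDegree ≤ d → SmallAlongFS p n → ∀ i, ∃ r : ℚ, (r : ℝ) = p.coeff i := by
  induction d with
  | zero =>
    intro p n hn hd h i
    rw [Polynomial.eq_C_of_natDegree_le_zero hd] at h ⊢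
    set c := p.coeff 0
    have hc : (c : UnitAddCircle) = 0 := by
      rw [← norm_le_zero_iff]
      refine le_of_forall_gt fun δ hδ => ?_
      obtain ⟨M, hM⟩ := h δ hδ
      have hle : M ≤ ∑ i ∈ Finset.range (M + 1), n i :=
        calc M ≤ ∑ i ∈ Finset.range (M + 1), 1 := by simp
          _ ≤ _ := Finset.sum_le_sum fun i _ => hn i
      simpa using hM (Finset.range (M + 1)) (by simp) hle
    obtain ⟨z, hz⟩ := (AddCircle.coe_eq_zero_iff 1).1 hc
    rw [Polynomial.coeff_C]
    split_ifs
    · exact ⟨z, by simpa using hz⟩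
    · exact ⟨0, by simp⟩
  | succ d ih =>
    intro p n hn hd h i
    have hm : (0 : ℝ) < n 0 := by exact_mod_cast hn 0
    obtain ⟨r, hr⟩ := ih _ _ (fun i => hn (i + 1)) (natDegree_taylor_sub_le hd _) h.taylor_sub d
    rw [coeff_taylor_sub hd] at hr
    obtain ⟨a, ha⟩ : ∃ a : ℚ, (a : ℝ) = p.coeff (d + 1) := by
      refine ⟨r / ((d + 1) * n 0), ?_⟩
      push_cast
      rw [hr]
      field_simp
    have hD : (a.den : ℝ) ≠ 0 := by exact_mod_cast a.den_nz
    have haD : (a.den : ℝ) * p.coeff (d + 1) = a.num := by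
      rw [← ha]
      exact_mod_cast a.den_mul_eq_num
    have hcoeff : ∀ j, (Polynomial.C (a.den : ℝ) * p
        - Polynomial.C (a.num : ℝ) * Polynomial.X ^ (d + 1)).coeff j
        = if j = d + 1 then 0 else a.den * p.coeff j := by
      intro j
      rw [Polynomial.coeff_sub, Polynomial.coeff_C_mul, Polynomial.coeff_C_mul_X_pow]
      split_ifs with hj
      · rw [hj, haD, sub_self]
      · rw [sub_zero]
    have hdeg : (Polynomial.C (a.den : ℝ) * p
        - Polynomial.C (a.num : ℝ) * Polynomial.X ^ (d + 1)).natDegree ≤ d := by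
      rw [Polynomial.natDegree_le_iff_coeff_eq_zero]
      intro N hN
      rw [hcoeff]
      split_ifs with hj
      · rfl
      · rw [Polynomial.coeff_eq_zero_of_natDegree_lt (by omega), mul_zero]
    by_cases hi : i = d + 1
    · exact ⟨a, by rw [hi, ha]⟩
    · obtain ⟨s, hs⟩ := ih _ n hn hdeg (h.clear_leading a.den_pos a.num (d + 1)) i
      rw [hcoeff, if_neg hi] at hs
      refine ⟨s / a.den, ?_⟩
      push_cast
      rw [hs]
      field_simp

/-- for a real polynomial with an irrational coefficient and `ε(n) → 0`,
the set `{n : ‖p(n)‖ < ε(n)}` contains no IP set. -/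
theorem poly_small_fractional_parts_no_IP (p : Polynomial ℝ)
    (hp : ∃ i : ℕ, Irrational (p.coeff i))
    (ε : ℕ → ℝ) (hε : Filter.Tendsto ε Filter.atTop (nhds 0)) :
    ¬ ∃ F : Set ℕ, F ⊆ {n : ℕ | distNearestInt (p.eval (n : ℝ)) < ε n} ∧ IsIPSet F := by
  rintro ⟨F, hF, n, hn, hsum⟩
  obtain ⟨i, hi⟩ := hp
  refine hi (rational_of_smallAlongFS p.natDegree p n hn le_rfl ?_ i)
  intro δ hδ
  obtain ⟨M, hM⟩ := eventually_atTop.1 (hε.eventually (gt_mem_nhds hδ))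
  refine ⟨M, fun α hα h => ?_⟩
  rw [UnitAddCircle.norm_eq]
  exact lt_trans (hF (hsum α hα)) (hM _ h)
end

section
/- For any δ > 0, there exists q₀ = q₀(δ) such that for all integers q ≥ q₀ and all real x ≥ 0, the interval [x, x + q^δ) contains an integer n coprime to q. -/
/-!
For a positive integer `q` with `k` distinct prime factors, any `2 ^ k` consecutive natural
numbers include one coprime to `q`. To see this, let `ζ p` be a primitive `p`-th root of unity.
The function `f n = ∏ p ∣ q, (1 - ζ p ^ n)` vanishes exactly at those `n` not coprime to `q`.
Expanding the product shows that `f` is a combination of `2 ^ k` geometric progressions, so it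
satisfies a linear recurrence of order `2 ^ k`; vanishing at `2 ^ k` consecutive integers would
make it vanish from there on, although `f n ≠ 0` for `n ≡ 1` modulo `q`
(`exists_coprime_of_two_pow`).

It remains to know that `2 ^ k ≤ q ^ δ` for large `q` (`two_pow_card_primeFactors_le`). All prime
factors beyond a fixed bound `P` satisfy `2 ≤ p ^ (δ / 2)`, and the others contribute at most
`2 ^ P`, whence `2 ^ k ≤ 2 ^ P * q ^ (δ / 2)`.
-/

open Filter Finset Pointwise

/-- A combination of `#s` geometric progressions that vanishes at `#s` consecutive integers
vanishes at all later ones. Distinctness of the ratios is not needed. -/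
lemma sum_geom_eq_zero {ι : Type*} [DecidableEq ι] (z : ι → ℂ) (s : Finset ι) :
    ∀ (c : ι → ℂ) (a : ℕ), (∀ i < s.card, ∑ j ∈ s, c j * z j ^ (a + i) = 0) →
      ∀ i, ∑ j ∈ s, c j * z j ^ (a + i) = 0 := by
  induction s using Finset.induction_on with
  | empty => simp
  | insert t s ht ih =>
    intro c a h
    rw [Finset.card_insert_of_notMem ht] at h
    -- Applying `f ↦ f (n + 1) - z t * f n` kills the progression of ratio `z t`.
    have key : ∀ n, ∑ j ∈ insert t s, c j * z j ^ (n + 1)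
        - z t * ∑ j ∈ insert t s, c j * z j ^ n = ∑ j ∈ s, (c j * (z j - z t)) * z j ^ n := by
      intro n
      rw [Finset.sum_insert ht, Finset.sum_insert ht, mul_add, Finset.mul_sum,
        add_sub_add_comm, ← Finset.sum_sub_distrib]
      have h0 : c t * z t ^ (n + 1) - z t * (c t * z t ^ n) = 0 := by ring
      rw [h0, zero_add]
      exact Finset.sum_congr rfl fun j _ => by ring
    have hs := ih (fun j => c j * (z j - z t)) a fun i hi => by
      rw [← key, h i (by omega), add_assoc, h (i + 1) (by omega)]
      ring
    intro i
    induction i with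
    | zero => exact h 0 (by omega)
    | succ i hi =>
      have h1 := key (a + i)
      rw [hs i, hi, mul_zero, sub_zero] at h1
      exact h1

/-- Kanold's bound for the Jacobsthal function. -/
lemma exists_coprime_of_two_pow (q : ℕ) (hq : 0 < q) (a : ℕ) :
    ∃ i < 2 ^ q.primeFactors.card, Nat.Coprime (a + i) q := by
  by_contra! hcon
  let ζ : ℕ → ℂ := fun p => Complex.exp (2 * Real.pi * Complex.I / p)
  have hζ : ∀ p ∈ q.primeFactors, ∀ n : ℕ, ζ p ^ n = 1 ↔ p ∣ n := fun p hp n =>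
    (Complex.isPrimitiveRoot_exp p (Nat.prime_of_mem_primeFactors hp).ne_zero).pow_eq_one_iff_dvd n
  have hexp : ∀ n : ℕ, ∏ p ∈ q.primeFactors, (1 - ζ p ^ n) =
      ∑ S ∈ q.primeFactors.powerset, (-1) ^ S.card * (∏ p ∈ S, ζ p) ^ n := by
    intro n
    simp_rw [sub_eq_add_neg]
    rw [Finset.prod_one_add]
    refine Finset.sum_congr rfl fun S _ => ?_
    rw [Finset.prod_neg, Finset.prod_pow]
  have hvan := sum_geom_eq_zero (fun S : Finset ℕ => ∏ p ∈ S, ζ p) q.primeFactors.powerset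
    (fun S => (-1) ^ S.card) a fun i hi => by
      rw [Finset.card_powerset] at hi
      rw [← hexp]
      obtain ⟨p, hp, hpa, hpq⟩ := Nat.Prime.not_coprime_iff_dvd.mp (hcon i hi)
      have hmem : p ∈ q.primeFactors := Nat.mem_primeFactors.mpr ⟨hp, hpq, hq.ne'⟩
      exact Finset.prod_eq_zero hmem (by rw [(hζ p hmem _).mpr hpa, sub_self])
  -- The integer `q * a + 1 > a` is coprime to `q`.
  have hle : a ≤ q * a + 1 := (Nat.le_mul_of_pos_left a hq).trans (Nat.le_succ _)
  have h := hvan (q * a + 1 - a)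
  rw [← hexp, Nat.add_sub_cancel' hle, Finset.prod_eq_zero_iff] at h
  obtain ⟨p, hp, h0⟩ := h
  have hd : p ∣ q * a + 1 := (hζ p hp _).mp (sub_eq_zero.mp h0).symm
  have h1 : p ∣ 1 :=
    (Nat.dvd_add_right ((Nat.dvd_of_mem_primeFactors hp).mul_right a)).mp hd
  exact (Nat.prime_of_mem_primeFactors hp).not_dvd_one h1

lemma two_pow_card_primeFactors_le (δ : ℝ) (hδ : 0 < δ) :
    ∀ᶠ q : ℕ in atTop, (2 : ℝ) ^ q.primeFactors.card ≤ (q : ℝ) ^ δ := by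
  have hlim : Tendsto (fun n : ℕ => (n : ℝ) ^ (δ / 2)) atTop atTop :=
    (tendsto_rpow_atTop (half_pos hδ)).comp tendsto_natCast_atTop_atTop
  obtain ⟨P, hP⟩ := eventually_atTop.mp (hlim.eventually_ge_atTop 2)
  filter_upwards [hlim.eventually_ge_atTop (2 ^ P), eventually_gt_atTop 0] with q hqP hq
  have hsmall : (2 : ℝ) ^ (q.primeFactors.filter (· < P)).card ≤ 2 ^ P := by
    refine pow_le_pow_right₀ one_le_two ?_
    calc _ ≤ (Finset.range P).card := Finset.card_le_card fun p hp => by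
          simpa using (Finset.mem_filter.mp hp).2
      _ = P := Finset.card_range P
  have hlarge : (2 : ℝ) ^ (q.primeFactors.filter (¬ · < P)).card ≤ (q : ℝ) ^ (δ / 2) := by
    calc (2 : ℝ) ^ (q.primeFactors.filter (¬ · < P)).card
        = ∏ p ∈ q.primeFactors.filter (¬ · < P), (2 : ℝ) := by rw [Finset.prod_const]
      _ ≤ ∏ p ∈ q.primeFactors.filter (¬ · < P), (p : ℝ) ^ (δ / 2) :=
          Finset.prod_le_prod (fun _ _ => zero_le_two) fun p hp =>
            hP p (not_lt.mp (Finset.mem_filter.mp hp).2)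
      _ = ((∏ p ∈ q.primeFactors.filter (¬ · < P), p : ℕ) : ℝ) ^ (δ / 2) := by
          rw [Real.finsetProd_rpow _ _ fun p _ => Nat.cast_nonneg p, Nat.cast_prod]
      _ ≤ (q : ℝ) ^ (δ / 2) := by
          refine Real.rpow_le_rpow (Nat.cast_nonneg _) ?_ (half_pos hδ).le
          exact_mod_cast Nat.le_of_dvd hq <|
            (Finset.prod_dvd_prod_of_subset _ _ _ (Finset.filter_subset _ _)).trans
              (Nat.prod_primeFactors_dvd q)
  calc (2 : ℝ) ^ q.primeFactors.card
      = 2 ^ (q.primeFactors.filter (· < P)).card *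
          2 ^ (q.primeFactors.filter (¬ · < P)).card := by
        rw [← pow_add, Finset.card_filter_add_card_filter_not]
    _ ≤ (q : ℝ) ^ (δ / 2) * (q : ℝ) ^ (δ / 2) := by
        gcongr
        exact hsmall.trans hqP
    _ = (q : ℝ) ^ δ := by
        rw [← Real.rpow_add (Nat.cast_pos.mpr hq), add_halves]

/-- for any `δ > 0` and sufficiently large `q`, every interval
`[x, x + q^δ)` with `x ≥ 0` contains an integer coprime to `q`. -/
theorem coprime_in_short_interval (δ : ℝ) (hδ : 0 < δ) :
    ∃ q₀ : ℕ, ∀ q : ℕ, q₀ ≤ q → ∀ x : ℝ, 0 ≤ x →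
      ∃ n : ℕ, Nat.Coprime n q ∧ x ≤ (n : ℝ) ∧ (n : ℝ) < x + (q : ℝ) ^ δ := by
  obtain ⟨N, hN⟩ := eventually_atTop.mp (two_pow_card_primeFactors_le δ hδ)
  refine ⟨N + 1, fun q hq x hx => ?_⟩
  obtain ⟨i, hi, hcop⟩ := exists_coprime_of_two_pow q (by omega) ⌈x⌉₊
  refine ⟨⌈x⌉₊ + i, hcop, ?_, ?_⟩
  · push_cast
    linarith [Nat.le_ceil x, (Nat.cast_nonneg i : (0 : ℝ) ≤ i)]
  · have h1 : ((i + 1 : ℕ) : ℝ) ≤ ((2 ^ q.primeFactors.card : ℕ) : ℝ) := Nat.cast_le.mpr hi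
    push_cast at h1 ⊢
    linarith [hN q (by omega), Nat.ceil_lt_add_one hx]
end
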